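/- Superadditive expectation bound: for dimension d ≥ 1, every k ≥ 1, every λ > 0, and all 0 < s ≤ t, one has E[F_{k,λ}(t)] ≥ ⌊t/(s+1)⌋^d · E[F_{k,λ}(s)]. -/

import Mathlib

open MeasureTheory ProbabilityTheory Filter

noncomputable instance instDecEqEuclidean (d : ℕ) :
    DecidableEq (EuclideanSpace ℝ (Fin d)) := Classical.decEq _

/-- `maxColorable d k r V` is the maximum number of vertices of the geometric
graph `G_r(V)` (edges between distinct points of `V` at Euclidean distance at
most `r`) that can be properly colored with `k` colors, i.e. the maximum
cardinality of a subset `S ⊆ V` admitting a proper `k`-coloring. -/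
noncomputable def maxColorable (d k : ℕ) (r : ℝ)
    (V : Finset (EuclideanSpace ℝ (Fin d))) : ℕ :=
  sSup {m : ℕ | ∃ S : Finset (EuclideanSpace ℝ (Fin d)), S ⊆ V ∧ S.card = m ∧
    ∃ c : EuclideanSpace ℝ (Fin d) → Fin k,
      ∀ u ∈ S, ∀ v ∈ S, u ≠ v → dist u v ≤ r → c u ≠ c v}

/-- The unit cube `[0,1]^d`. -/
def unitCube (d : ℕ) : Set (EuclideanSpace ℝ (Fin d)) :=
  {x | ∀ i, x i ∈ Set.Icc (0 : ℝ) 1}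

/-- The uniform distribution on the unit cube `[0,1]^d` (Lebesgue measure
restricted to the cube, which has total mass one). -/
noncomputable def uniformCube (d : ℕ) : Measure (EuclideanSpace ℝ (Fin d)) :=
  volume.restrict (unitCube d)

/-- `EH d k r n = E[H_{k,r}(n)] = E[N_{k,r}({X_1,…,X_n})]` for `X_1,…,X_n`
i.i.d. uniform on the unit cube `[0,1]^d`. -/
noncomputable def EH (d k : ℕ) (r : ℝ) (n : ℕ) : ℝ :=
  ∫ x : Fin n → EuclideanSpace ℝ (Fin d),
    (maxColorable d k r (Finset.image x Finset.univ) : ℝ)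
    ∂(Measure.pi fun _ => uniformCube d)

/-- `EF d k lam t = E[F_{k,lam}(t)] = ∑_n P(Po(lam t^d) = n) E[H_{k,1/t}(n)]`,
the expected maximum number of `k`-colorable vertices of the unit-distance
geometric graph on a Poisson process of intensity `lam` in `[0,t]^d`. -/
noncomputable def EF (d k : ℕ) (lam t : ℝ) : ℝ :=
  ∑' n : ℕ, poissonPMFReal (Real.toNNReal (lam * t ^ d)) n * EH d k (1 / t) n

/-- The normalized expectation `\bar F_{k,lam}(t) = E[F_{k,lam}(t)]/(lam t^d)`. -/
noncomputable def Fbar (d k : ℕ) (lam t : ℝ) : ℝ :=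
  EF d k lam t / (lam * t ^ d)

/-- The constant `a_{k,lam} = inf_{t>0} \bar F_{k,lam}(t)`. -/
noncomputable def aConst (d k : ℕ) (lam : ℝ) : ℝ :=
  sInf {x : ℝ | ∃ t : ℝ, 0 < t ∧ x = Fbar d k lam t}

/-- The volume `V_d(r) = π^{d/2} r^d / Γ(d/2 + 1)` of the `d`-dimensional
Euclidean ball of radius `r`. -/
noncomputable def ballVol (d : ℕ) (r : ℝ) : ℝ :=
  Real.pi ^ ((d : ℝ) / 2) * r ^ d / Real.Gamma ((d : ℝ) / 2 + 1)

/-!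
In `[0, t]^d` place `m^d` half-open cubes of side `s` in a grid of spacing `s + 1`, where
`m = ⌊t / (s + 1)⌋`. Points of different cubes are more than `1` apart, so colorings of the parts
of the configuration in the cubes combine, and the sum over the cubes of the maximum numbers of
`k`-colorable vertices is at most that of the whole configuration. The part of the Poisson process
in one cube is a translate of the Poisson process on `[0, s]^d`, so each cube contributes
`E[F_{k,λ}(s)]` to the expectation.
-/

section GeometricGraph

variable {d : ℕ}

/-- The geometric graph `G_r` on the whole space; the paper's `G_r(V)` is its induced subgraph
on `V`. -/
def geometricGraph (X : Type*) [PseudoMetricSpace X] (r : ℝ) : SimpleGraph X where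
  Adj u v := u ≠ v ∧ dist u v ≤ r
  symm := ⟨fun u v h ↦ ⟨h.1.symm, dist_comm u v ▸ h.2⟩⟩
  loopless := ⟨fun _ h ↦ h.1 rfl⟩

variable {k : ℕ} {r : ℝ}

lemma bddAbove_card_properlyColorable (d k : ℕ) (r : ℝ) (V : Finset (EuclideanSpace ℝ (Fin d))) :
    BddAbove {m : ℕ | ∃ S : Finset (EuclideanSpace ℝ (Fin d)), S ⊆ V ∧ S.card = m ∧
      ∃ c : EuclideanSpace ℝ (Fin d) → Fin k,
        ∀ u ∈ S, ∀ v ∈ S, u ≠ v → dist u v ≤ r → c u ≠ c v} := by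
  refine ⟨V.card, ?_⟩
  rintro _ ⟨S, hSV, rfl, -⟩
  exact Finset.card_le_card hSV

lemma card_le_maxColorable {S V : Finset (EuclideanSpace ℝ (Fin d))} (hSV : S ⊆ V)
    (hS : ((geometricGraph _ r).induce (S : Set (EuclideanSpace ℝ (Fin d)))).Colorable k) :
    S.card ≤ maxColorable d k r V := by
  obtain rfl | ⟨u₀, hu₀⟩ := S.eq_empty_or_nonempty
  · simp
  obtain ⟨c⟩ := hS
  refine le_csSup (bddAbove_card_properlyColorable d k r V) ⟨S, hSV, rfl, ?_⟩
  refine ⟨fun u ↦ if hu : u ∈ S then c ⟨u, hu⟩ else c ⟨u₀, hu₀⟩, fun u hu v hv huv hr ↦ ?_⟩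
  simp only [dif_pos hu, dif_pos hv]
  exact c.valid (v := ⟨u, hu⟩) (w := ⟨v, hv⟩) ⟨huv, hr⟩

lemma exists_subset_card_eq_maxColorable (d k : ℕ) (r : ℝ)
    (V : Finset (EuclideanSpace ℝ (Fin d))) :
    ∃ S ⊆ V, S.card = maxColorable d k r V ∧
      ((geometricGraph _ r).induce (S : Set (EuclideanSpace ℝ (Fin d)))).Colorable k := by
  rcases Set.eq_empty_or_nonempty {m : ℕ | ∃ S : Finset (EuclideanSpace ℝ (Fin d)), S ⊆ V ∧
    S.card = m ∧ ∃ c : EuclideanSpace ℝ (Fin d) → Fin k,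
      ∀ u ∈ S, ∀ v ∈ S, u ≠ v → dist u v ≤ r → c u ≠ c v} with hempty | hne
  -- With `k = 0` there is no `c` at all, and the supremum of the empty set is `0`.
  · have : IsEmpty ((∅ : Finset (EuclideanSpace ℝ (Fin d))) : Set (EuclideanSpace ℝ (Fin d))) :=
      ⟨fun u ↦ Finset.notMem_empty _ u.2⟩
    refine ⟨∅, V.empty_subset, ?_, .of_isEmpty k⟩
    rw [maxColorable, hempty, csSup_empty, Finset.card_empty, bot_eq_zero]
  · obtain ⟨S, hSV, hcard, c, hc⟩ := Nat.sSup_mem hne (bddAbove_card_properlyColorable d k r V)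
    exact ⟨S, hSV, hcard, ⟨.mk (fun u ↦ c u) fun {u v} h ↦ hc u u.2 v v.2 h.1 h.2⟩⟩

lemma maxColorable_le_card (d k : ℕ) (r : ℝ) (V : Finset (EuclideanSpace ℝ (Fin d))) :
    maxColorable d k r V ≤ V.card := by
  obtain ⟨S, hSV, hcard, -⟩ := exists_subset_card_eq_maxColorable d k r V
  exact hcard ▸ Finset.card_le_card hSV

lemma maxColorable_image_le_maxColorable_image {ι : Type*} [Fintype ι] {d₁ d₂ : ℕ} {r₁ r₂ : ℝ}
    {x : ι → EuclideanSpace ℝ (Fin d₁)} {y : ι → EuclideanSpace ℝ (Fin d₂)}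
    (heq : ∀ i j, y i = y j → x i = x j)
    (hdist : ∀ i j, dist (y i) (y j) ≤ r₂ → dist (x i) (x j) ≤ r₁) :
    maxColorable d₁ k r₁ (Finset.univ.image x) ≤ maxColorable d₂ k r₂ (Finset.univ.image y) := by
  obtain ⟨S, hSx, hcard, hS⟩ :=
    exists_subset_card_eq_maxColorable d₁ k r₁ (Finset.univ.image x)
  obtain ⟨T, -, hxT, rfl⟩ := Finset.exists_subset_injOn_image_eq_of_surjOn
    (f := x) (s := Set.univ) S fun u hu ↦ by simpa using hSx hu
  have hyT : Set.InjOn y T := fun i hi j hj hij ↦ hxT hi hj (heq i j hij)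
  have hpre (v : (T.image y : Set (EuclideanSpace ℝ (Fin d₂)))) : ∃ i ∈ T, y i = v := by
    simpa using v.2
  choose pre hpreT hpre using hpre
  rw [← hcard, Finset.card_image_of_injOn hxT, ← Finset.card_image_of_injOn hyT]
  refine card_le_maxColorable (Finset.image_subset_image T.subset_univ) (hS.of_hom
    ⟨fun v ↦ ⟨x (pre v), Finset.mem_image_of_mem x (hpreT v)⟩, fun {v w} hvw ↦ ?_⟩)
  have hadj : (geometricGraph (EuclideanSpace ℝ (Fin d₂)) r₂).Adj v w := hvw
  obtain ⟨hne, hle⟩ := hadj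
  rw [← hpre v, ← hpre w] at hne hle
  exact ⟨fun h ↦ hne (congrArg y (hxT (hpreT v) (hpreT w) h)), hdist _ _ hle⟩

lemma maxColorable_image_smul_add (a : EuclideanSpace ℝ (Fin d)) {c : ℝ} (hc : 0 < c) (r : ℝ)
    (V : Finset (EuclideanSpace ℝ (Fin d))) :
    maxColorable d k (c * r) (V.image fun x ↦ a + c • x) = maxColorable d k r V := by
  have hdist (u v : EuclideanSpace ℝ (Fin d)) :
      dist (a + c • u) (a + c • v) ≤ c * r ↔ dist u v ≤ r := by
    rw [dist_add_left, dist_smul₀, Real.norm_of_nonneg hc.le, mul_le_mul_iff_right₀ hc]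
  have himage (f : EuclideanSpace ℝ (Fin d) → EuclideanSpace ℝ (Fin d)) :
      (Finset.univ.image fun u : V ↦ f u) = V.image f := by
    rw [Finset.univ_eq_attach, ← Function.comp_def f, ← Finset.image_image, Finset.attach_image_val]
  rw [← himage, ← congrArg (maxColorable d k r) ((himage id).trans V.image_id)]
  refine le_antisymm ?_ ?_ <;> refine maxColorable_image_le_maxColorable_image ?_ ?_
  · exact fun u v (h : (u : EuclideanSpace ℝ (Fin d)) = v) ↦ by rw [h]
  · exact fun u v ↦ (hdist u v).2
  · exact fun u v h ↦ smul_right_injective _ hc.ne' (add_left_cancel h)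
  · exact fun u v ↦ (hdist u v).1

lemma measurable_maxColorable_image (d k : ℕ) (r : ℝ) {ι : Type*} [Fintype ι] :
    Measurable fun x : ι → EuclideanSpace ℝ (Fin d) ↦
      maxColorable d k r (Finset.univ.image x) := by
  let pattern (x : ι → EuclideanSpace ℝ (Fin d)) (i j : ι) : Prop × Prop :=
    (x i = x j, dist (x i) (x j) ≤ r)
  have hpattern : Measurable pattern := by
    refine measurable_pi_lambda _ fun i ↦ measurable_pi_lambda _ fun j ↦ .prodMk ?_ ?_
    · exact measurableSet_setOfPred.1
        (measurableSet_eq_fun (measurable_pi_apply i) (measurable_pi_apply j))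
    · exact measurableSet_setOfPred.1
        (measurableSet_le ((measurable_pi_apply i).dist (measurable_pi_apply j)) measurable_const)
  have hfactor : (fun x : ι → EuclideanSpace ℝ (Fin d) ↦
      maxColorable d k r (Finset.univ.image x)).FactorsThrough pattern := by
    intro x y hxy
    have hij (i j : ι) : (x i = x j ↔ y i = y j) ∧
        (dist (x i) (x j) ≤ r ↔ dist (y i) (y j) ≤ r) := by
      simpa [pattern] using congrFun (congrFun hxy i) j
    exact le_antisymm
      (maxColorable_image_le_maxColorable_image (fun i j ↦ (hij i j).1.2) fun i j ↦ (hij i j).2.2)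
      (maxColorable_image_le_maxColorable_image (fun i j ↦ (hij i j).1.1) fun i j ↦ (hij i j).2.1)
  rw [← hfactor.extend_comp (fun _ ↦ 0)]
  exact (Measurable.of_discrete).comp hpattern

lemma colorable_induce_geometricGraph_biUnion {X ι : Type*} [PseudoMetricSpace X] [DecidableEq X]
    [Fintype ι] {S : ι → Finset X}
    (hsep : ∀ i j, i ≠ j → ∀ u ∈ S i, ∀ v ∈ S j, r < dist u v)
    (hS : ∀ i, ((geometricGraph X r).induce (S i : Set X)).Colorable k) :
    ((geometricGraph X r).induce (Finset.univ.biUnion S : Set X)).Colorable k := by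
  have c (i : ι) := (hS i).some
  have hmem (u : (Finset.univ.biUnion S : Set X)) : ∃ i, ↑u ∈ S i := by
    simpa using u.2
  choose idx hidx using hmem
  have hvalid : ∀ i j, i = j → ∀ u v (hu : u ∈ S i) (hv : v ∈ S j),
      (geometricGraph X r).Adj u v → c i ⟨u, hu⟩ ≠ c j ⟨v, hv⟩ := by
    rintro i _ rfl u v hu hv huv
    exact (c i).valid (v := ⟨u, hu⟩) (w := ⟨v, hv⟩) huv
  refine ⟨.mk (fun u ↦ c (idx u) ⟨u, hidx u⟩) fun {u v} huv ↦ hvalid _ _ ?_ _ _ _ _ huv⟩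
  by_contra hne
  exact (hsep _ _ hne _ (hidx u) _ (hidx v)).not_ge huv.2

open Classical in
lemma sum_maxColorable_filter_le {ι : Type*} [Fintype ι] (hr : 0 ≤ r)
    {Q : ι → Set (EuclideanSpace ℝ (Fin d))}
    (hsep : ∀ i j, i ≠ j → ∀ u ∈ Q i, ∀ v ∈ Q j, r < dist u v)
    (V : Finset (EuclideanSpace ℝ (Fin d))) :
    ∑ i, maxColorable d k r {u ∈ V | u ∈ Q i} ≤ maxColorable d k r V := by
  choose S hSV hcard hS using
    fun i ↦ exists_subset_card_eq_maxColorable d k r {u ∈ V | u ∈ Q i}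
  have hSQ (i : ι) (u) (hu : u ∈ S i) : u ∈ Q i := (Finset.mem_filter.1 (hSV i hu)).2
  have hSsep (i j : ι) (hij : i ≠ j) (u) (hu : u ∈ S i) (v) (hv : v ∈ S j) : r < dist u v :=
    hsep i j hij u (hSQ i u hu) v (hSQ j v hv)
  have hdisj : Set.PairwiseDisjoint (Finset.univ : Finset ι) S := fun i _ j _ hij ↦
    Finset.disjoint_left.2 fun u hui huj ↦
      (hr.trans_lt (hSsep i j hij u hui u huj)).ne' (dist_self u)
  calc ∑ i, maxColorable d k r {u ∈ V | u ∈ Q i} = (Finset.univ.biUnion S).card := by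
        rw [Finset.card_biUnion hdisj]
        exact Finset.sum_congr rfl fun i _ ↦ (hcard i).symm
    _ ≤ maxColorable d k r V :=
        card_le_maxColorable
          (Finset.biUnion_subset.2 fun i _ ↦ (hSV i).trans (Finset.filter_subset _ _))
          (colorable_induce_geometricGraph_biUnion hSsep hS)

end GeometricGraph

section Poisson

open scoped ENNReal NNReal Nat
open Finset.HasAntidiagonal (antidiagonal)

section FiniteProducts

lemma image_univ_comp_equiv {E ι κ : Type*} [DecidableEq E] [Fintype ι] [Fintype κ]
    (x : ι → E) (e : κ ≃ ι) :
    (Finset.univ.image fun i ↦ x (e i)) = Finset.univ.image x := by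
  classical
  rw [← Finset.image_univ_equiv e, Finset.image_image, Function.comp_def]

variable {ι : Type*} [Fintype ι]

lemma lintegral_pi_comp_subtype {α : ι → Type*} [∀ i, MeasurableSpace (α i)]
    (μ : ∀ i, Measure (α i)) [∀ i, SigmaFinite (μ i)] (p : ι → Prop) [DecidablePred p]
    [Fintype (Subtype p)] {G : (∀ i : Subtype p, α i) → ℝ≥0∞} (hG : Measurable G) :
    ∫⁻ x, G (fun i ↦ x i) ∂Measure.pi μ =
      (∏ i : {i // ¬p i}, μ i Set.univ) * ∫⁻ y, G y ∂Measure.pi fun i : Subtype p ↦ μ i := by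
  obtain rfl := Subsingleton.elim (Subtype.fintype p) ‹_›
  calc ∫⁻ x, G (fun i ↦ x i) ∂Measure.pi μ
    _ = ∫⁻ z, G z.1 ∂(Measure.pi fun i : Subtype p ↦ μ i).prod
          (Measure.pi fun i : {i // ¬p i} ↦ μ i) :=
        (measurePreserving_piEquivPiSubtypeProd μ p).lintegral_comp (hG.comp measurable_fst)
    _ = _ := by
        rw [← lintegral_map hG measurable_fst, Measure.map_fst_prod, lintegral_smul_measure,
          Measure.pi_univ, smul_eq_mul]

lemma pi_const_smul {E : Type*} [MeasurableSpace E] (μ : Measure E) [SigmaFinite μ] (c : ℝ≥0) :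
    (Measure.pi fun _ : ι ↦ c • μ) = c ^ Fintype.card ι • Measure.pi fun _ : ι ↦ μ := by
  refine Measure.pi_eq fun s _ ↦ ?_
  simp only [Measure.smul_apply, Measure.pi_pi, ENNReal.smul_def, smul_eq_mul,
    Finset.prod_mul_distrib, Finset.prod_const, Finset.card_univ, ENNReal.coe_pow]

end FiniteProducts

section Series

lemma tsum_inv_factorial_mul_pow {a : ℝ≥0∞} (ha : a ≠ ∞) :
    ∑' n : ℕ, (n ! : ℝ≥0∞)⁻¹ * a ^ n = ENNReal.ofReal (Real.exp a.toReal) := by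
  lift a to ℝ≥0 using ha
  have hsum : HasSum (fun n : ℕ ↦ (a : ℝ) ^ n / n !) (Real.exp a) := by
    simpa [Real.exp_eq_exp_ℝ] using NormedSpace.expSeries_div_hasSum_exp (a : ℝ)
  rw [ENNReal.coe_toReal, ← hsum.tsum_eq,
    ENNReal.ofReal_tsum_of_nonneg (fun n ↦ by positivity) hsum.summable]
  refine tsum_congr fun n ↦ ?_
  rw [ENNReal.ofReal_div_of_pos (by positivity), ENNReal.ofReal_pow a.coe_nonneg,
    ENNReal.ofReal_coe_nnreal, ENNReal.ofReal_natCast, ENNReal.div_eq_inv_mul]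

lemma tsum_sum_antidiagonal_mul (f g : ℕ → ℝ≥0∞) :
    ∑' n, ∑ ij ∈ antidiagonal n, f ij.1 * g ij.2 = (∑' i, f i) * ∑' j, g j := by
  calc ∑' n, ∑ ij ∈ antidiagonal n, f ij.1 * g ij.2
    _ = ∑' ij : ℕ × ℕ, f ij.1 * g ij.2 := by
        rw [← Finset.HasAntidiagonal.sigmaAntidiagonalEquivProd.tsum_eq, ENNReal.tsum_sigma']
        refine tsum_congr fun n ↦ ?_
        rw [tsum_fintype, ← Finset.sum_coe_sort]
        rfl
    _ = (∑' i, f i) * ∑' j, g j := by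
        rw [ENNReal.tsum_prod (f := fun i j ↦ f i * g j)]
        simp only [ENNReal.tsum_mul_left, ENNReal.tsum_mul_right]

lemma inv_factorial_mul_choose {n i j : ℕ} (hij : i + j = n) :
    (n ! : ℝ≥0∞)⁻¹ * n.choose i = (i ! : ℝ≥0∞)⁻¹ * (j ! : ℝ≥0∞)⁻¹ := by
  subst hij
  have hne (m : ℕ) : (m ! : ℝ≥0∞) ≠ 0 := Nat.cast_ne_zero.2 m.factorial_ne_zero
  have htop (m : ℕ) : (m ! : ℝ≥0∞) ≠ ∞ := ENNReal.natCast_ne_top _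
  have hfact : ((i + j).choose i : ℝ≥0∞) * (i ! * j !) = (i + j)! := by
    rw [← mul_assoc]
    exact_mod_cast Nat.choose_symm_add ▸ Nat.add_choose_mul_factorial_mul_factorial i j
  rw [← ENNReal.mul_inv (.inl (hne i)) (.inl (htop i)), ← hfact,
    ENNReal.mul_inv (.inr <| ENNReal.mul_ne_top (htop i) (htop j))
      (.inr <| mul_ne_zero (hne i) (hne j)), mul_right_comm,
    ENNReal.inv_mul_cancel _ (ENNReal.natCast_ne_top _), one_mul]
  exact Nat.cast_ne_zero.2 (Nat.choose_pos (Nat.le_add_right i j)).ne'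

lemma inv_factorial_mul_sum_finset (n : ℕ) (g : ℕ → ℕ → ℝ≥0∞) :
    (n ! : ℝ≥0∞)⁻¹ * ∑ A : Finset (Fin n), g A.card Aᶜ.card =
      ∑ ij ∈ antidiagonal n, (ij.1 ! : ℝ≥0∞)⁻¹ * (ij.2 ! : ℝ≥0∞)⁻¹ * g ij.1 ij.2 := by
  have hsum : ∑ A : Finset (Fin n), g A.card Aᶜ.card =
      ∑ ij ∈ antidiagonal n, n.choose ij.1 * g ij.1 ij.2 := by
    simpa [Finset.card_compl, Finset.Nat.sum_antidiagonal_eq_sum_range_succ_mk] using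
      Finset.sum_powerset_apply_card (fun m ↦ g m (n - m)) (x := (Finset.univ : Finset (Fin n)))
  rw [hsum, Finset.mul_sum]
  refine Finset.sum_congr rfl fun ij hij ↦ ?_
  rw [← mul_assoc, inv_factorial_mul_choose (Finset.HasAntidiagonal.mem_antidiagonal.1 hij)]

end Series

section HitBox

variable {E ι : Type*} [DecidableEq ι] {Q : Set E}

/-- The event that, of the points `x i`, exactly those with index in `A` lie in `Q`, written as a
box so that product measures restrict to it. -/
def hitBox (Q : Set E) (A : Finset ι) : Set (ι → E) :=
  Set.univ.pi fun i ↦ if i ∈ A then Q else Qᶜ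

lemma mem_hitBox {A : Finset ι} {x : ι → E} : x ∈ hitBox Q A ↔ ∀ i, x i ∈ Q ↔ i ∈ A := by
  refine Set.mem_univ_pi.trans (forall_congr' fun i ↦ ?_)
  by_cases hi : i ∈ A <;> simp [hi]

lemma measurableSet_hitBox [MeasurableSpace E] [Countable ι] (hQ : MeasurableSet Q)
    (A : Finset ι) : MeasurableSet (hitBox Q A) := by
  refine .univ_pi fun i ↦ ?_
  split_ifs
  exacts [hQ, hQ.compl]

open Classical in
lemma apply_filter_image_univ_eq_sum_indicator [DecidableEq E] [Fintype ι] (F : Finset E → ℝ≥0∞)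
    (Q : Set E) (x : ι → E) :
    F {u ∈ Finset.univ.image x | u ∈ Q} =
      ∑ A : Finset ι,
        (hitBox Q A).indicator (fun x ↦ F (Finset.univ.image fun i : A ↦ x i)) x := by
  let A₀ : Finset ι := Finset.univ.filter fun i ↦ x i ∈ Q
  have hmem (A : Finset ι) : x ∈ hitBox Q A ↔ A = A₀ := by
    simp [mem_hitBox, A₀, Finset.ext_iff, iff_comm]
  have himage : {u ∈ Finset.univ.image x | u ∈ Q} = Finset.univ.image fun i : A₀ ↦ x i := by
    ext u
    simp only [A₀, Finset.mem_filter, Finset.mem_image, Finset.mem_univ, true_and, Subtype.exists]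
    exact ⟨fun ⟨⟨i, hi⟩, hu⟩ ↦ ⟨i, hi ▸ hu, hi⟩, fun ⟨i, hiQ, hi⟩ ↦ ⟨⟨i, hi⟩, hi ▸ hiQ⟩⟩
  rw [Finset.sum_eq_single A₀ (fun A _ hA ↦ Set.indicator_of_notMem (mt (hmem A).1 hA) _) (by simp),
    Set.indicator_of_mem ((hmem A₀).2 rfl), himage]

end HitBox

variable {E : Type*} [MeasurableSpace E] [DecidableEq E]

/-- The integral of `F {x₁, …, xₙ}` against the `n`-fold product of `μ`; for a probability
measure `μ` this is the expectation of `F` at a sample of `n` independent points. -/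
noncomputable def sampleLIntegral (μ : Measure E) (F : Finset E → ℝ≥0∞) (n : ℕ) : ℝ≥0∞ :=
  ∫⁻ x : Fin n → E, F (Finset.univ.image x) ∂Measure.pi fun _ ↦ μ

/-- The expectation of `F` at a Poisson point process whose intensity is the finite measure `μ`:
the number of points has mean `μ univ` and, given the number, the points are independent with law
`μ / μ univ`. The powers of `μ univ` have been cancelled, so no normalization of `μ` appears. -/
noncomputable def poissonLIntegral (μ : Measure E) (F : Finset E → ℝ≥0∞) : ℝ≥0∞ :=
  ENNReal.ofReal (Real.exp (-μ.real Set.univ)) * ∑' n : ℕ, (n ! : ℝ≥0∞)⁻¹ * sampleLIntegral μ F n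

/-- Measurability of a function of a finite configuration of points, phrased through finite
sequences because `Finset E` carries no σ-algebra. -/
def MeasurableOnSamples (F : Finset E → ℝ≥0∞) : Prop :=
  ∀ n : ℕ, Measurable fun x : Fin n → E ↦ F (Finset.univ.image x)

variable {μ : Measure E} {F : Finset E → ℝ≥0∞}

lemma MeasurableOnSamples.measurable_image_univ (hF : MeasurableOnSamples F) (ι : Type*)
    [Fintype ι] : Measurable fun x : ι → E ↦ F (Finset.univ.image x) := by
  let e := Fintype.equivFin ι
  have hcomp : Measurable fun (x : ι → E) i ↦ x (e.symm i) := by fun_prop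
  simpa only [Function.comp_def, image_univ_comp_equiv] using (hF (Fintype.card ι)).comp hcomp

section Sample

lemma lintegral_image_univ_eq_sampleLIntegral [SigmaFinite μ] (ι : Type*) [Fintype ι]
    (F : Finset E → ℝ≥0∞) :
    ∫⁻ x : ι → E, F (Finset.univ.image x) ∂Measure.pi (fun _ ↦ μ) =
      sampleLIntegral μ F (Fintype.card ι) := by
  let e := Fintype.equivFin ι
  rw [sampleLIntegral,
    (measurePreserving_arrowCongr' (fun _ ↦ μ) (fun _ ↦ μ) e (.refl E)
      fun _ ↦ .id μ).lintegral_map_equiv fun y ↦ F (Finset.univ.image y)]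
  exact lintegral_congr fun x ↦ congrArg F (image_univ_comp_equiv x e.symm).symm

lemma sampleLIntegral_map {E' : Type*} [MeasurableSpace E'] [DecidableEq E'] [IsFiniteMeasure μ]
    {f : E → E'} (hf : Measurable f) {F : Finset E' → ℝ≥0∞} (hF : MeasurableOnSamples F) (n : ℕ) :
    sampleLIntegral (μ.map f) F n = sampleLIntegral μ (fun V ↦ F (V.image f)) n := by
  have hfn : Measurable fun (x : Fin n → E) i ↦ f (x i) := by fun_prop
  rw [sampleLIntegral, ← Measure.pi_map_pi fun _ ↦ hf.aemeasurable, lintegral_map (hF n) hfn]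
  simp only [sampleLIntegral, Finset.image_image, Function.comp_def]

lemma sampleLIntegral_smul [SigmaFinite μ] (c : ℝ≥0) (F : Finset E → ℝ≥0∞) (n : ℕ) :
    sampleLIntegral (c • μ) F n = c ^ n * sampleLIntegral μ F n := by
  rw [sampleLIntegral, pi_const_smul, lintegral_smul_measure, Fintype.card_fin, sampleLIntegral,
    ENNReal.smul_def, smul_eq_mul, ENNReal.coe_pow]

lemma sampleLIntegral_le_mul_pow [SigmaFinite μ] (hF : ∀ V, F V ≤ V.card) (n : ℕ) :
    sampleLIntegral μ F n ≤ n * μ Set.univ ^ n := by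
  calc sampleLIntegral μ F n ≤ ∫⁻ _ : Fin n → E, n ∂Measure.pi fun _ ↦ μ := by
        refine lintegral_mono fun x ↦ (hF _).trans ?_
        exact_mod_cast Finset.card_image_le.trans (Finset.card_fin n).le
    _ = n * μ Set.univ ^ n := by
        rw [lintegral_const, Measure.pi_univ, Finset.prod_const, Finset.card_fin]

end Sample

section Thinning

variable {Q : Set E}

open Classical in
lemma MeasurableOnSamples.filter (hF : MeasurableOnSamples F) (hQ : MeasurableSet Q) :
    MeasurableOnSamples fun V ↦ F {u ∈ V | u ∈ Q} := by
  intro n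
  simp only [apply_filter_image_univ_eq_sum_indicator]
  refine Finset.measurable_sum _ fun A _ ↦ .indicator ?_ (measurableSet_hitBox hQ A)
  exact (hF.measurable_image_univ A).comp (by fun_prop)

lemma setLIntegral_hitBox [SigmaFinite μ] {ι : Type*} [Fintype ι] [DecidableEq ι]
    (Q : Set E) (hF : MeasurableOnSamples F) (A : Finset ι) :
    ∫⁻ x in hitBox Q A, F (Finset.univ.image fun i : A ↦ x i) ∂Measure.pi (fun _ ↦ μ) =
      μ Qᶜ ^ Aᶜ.card * sampleLIntegral (μ.restrict Q) F A.card := by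
  let ν (i : ι) : Measure E := μ.restrict (if i ∈ A then Q else Qᶜ)
  have hin (i : A) : ν i = μ.restrict Q := by
    simp only [ν, if_pos i.2]
  have hout (i : {i // i ∉ A}) : ν i Set.univ = μ Qᶜ := by
    simp only [ν, if_neg i.2, Measure.restrict_apply_univ]
  calc ∫⁻ x in hitBox Q A, F (Finset.univ.image fun i : A ↦ x i) ∂Measure.pi (fun _ ↦ μ)
    _ = (∏ i : {i // i ∉ A}, ν i Set.univ) *
          ∫⁻ y : A → E, F (Finset.univ.image y) ∂Measure.pi fun i : A ↦ ν i := by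
        rw [hitBox, Measure.restrict_pi_pi]
        exact lintegral_pi_comp_subtype ν (· ∈ A) (hF.measurable_image_univ A)
    _ = μ Qᶜ ^ Aᶜ.card * sampleLIntegral (μ.restrict Q) F A.card := by
        simp only [hin, hout, Finset.prod_const, lintegral_image_univ_eq_sampleLIntegral,
          Fintype.card_coe, Finset.card_univ, Fintype.card_subtype_compl, Finset.card_compl]

open Classical in
lemma sampleLIntegral_filter [SigmaFinite μ] (hQ : MeasurableSet Q)
    (hF : MeasurableOnSamples F) (n : ℕ) :
    sampleLIntegral μ (fun V ↦ F {u ∈ V | u ∈ Q}) n =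
      ∑ A : Finset (Fin n), μ Qᶜ ^ Aᶜ.card * sampleLIntegral (μ.restrict Q) F A.card := by
  have hterm (A : Finset (Fin n)) :
      Measurable fun x : Fin n → E ↦ F (Finset.univ.image fun i : A ↦ x i) :=
    (hF.measurable_image_univ A).comp (by fun_prop)
  simp only [sampleLIntegral, apply_filter_image_univ_eq_sum_indicator]
  rw [lintegral_finsetSum _ fun A _ ↦ (hterm A).indicator (measurableSet_hitBox hQ A)]
  refine Finset.sum_congr rfl fun A _ ↦ ?_
  rw [lintegral_indicator (measurableSet_hitBox hQ A), setLIntegral_hitBox Q hF, sampleLIntegral]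

open Classical in
-- Given `n` points, the number in `Q` is binomial; summing over `n` is a Cauchy product, whose
-- second factor, the exponential series of `μ Qᶜ`, adjusts the normalization `exp (-μ univ)`.
lemma poissonLIntegral_filter [IsFiniteMeasure μ] (hQ : MeasurableSet Q)
    (hF : MeasurableOnSamples F) :
    poissonLIntegral μ (fun V ↦ F {u ∈ V | u ∈ Q}) = poissonLIntegral (μ.restrict Q) F := by
  have hnorm : ENNReal.ofReal (Real.exp (-μ.real Set.univ)) *
      ENNReal.ofReal (Real.exp (μ Qᶜ).toReal) = ENNReal.ofReal (Real.exp (-μ.real Q)) := by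
    rw [← ENNReal.ofReal_mul (Real.exp_nonneg _), ← Real.exp_add, ← measureReal_def,
      ← measureReal_add_measureReal_compl hQ, neg_add, neg_add_cancel_right]
  calc poissonLIntegral μ (fun V ↦ F {u ∈ V | u ∈ Q})
    _ = ENNReal.ofReal (Real.exp (-μ.real Set.univ)) *
          ∑' n, ∑ ij ∈ antidiagonal n,
            ((ij.1 ! : ℝ≥0∞)⁻¹ * sampleLIntegral (μ.restrict Q) F ij.1) *
              ((ij.2 ! : ℝ≥0∞)⁻¹ * μ Qᶜ ^ ij.2) := by
        simp only [poissonLIntegral, sampleLIntegral_filter hQ hF]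
        refine congrArg _ (tsum_congr fun n ↦ ?_)
        rw [inv_factorial_mul_sum_finset n
          fun i j ↦ μ Qᶜ ^ j * sampleLIntegral (μ.restrict Q) F i]
        exact Finset.sum_congr rfl fun ij _ ↦ by ring
    _ = ENNReal.ofReal (Real.exp (-μ.real Q)) *
          ∑' n : ℕ, (n ! : ℝ≥0∞)⁻¹ * sampleLIntegral (μ.restrict Q) F n := by
        rw [tsum_sum_antidiagonal_mul (fun i ↦ (i ! : ℝ≥0∞)⁻¹ * sampleLIntegral (μ.restrict Q) F i)
          fun j ↦ (j ! : ℝ≥0∞)⁻¹ * μ Qᶜ ^ j, tsum_inv_factorial_mul_pow (measure_ne_top μ _),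
          ← hnorm]
        ring
    _ = poissonLIntegral (μ.restrict Q) F := by
        rw [poissonLIntegral, measureReal_restrict_apply_univ]

end Thinning

lemma poissonLIntegral_map {E' : Type*} [MeasurableSpace E'] [DecidableEq E'] [IsFiniteMeasure μ]
    {f : E → E'} (hf : Measurable f) {F : Finset E' → ℝ≥0∞} (hF : MeasurableOnSamples F) :
    poissonLIntegral (μ.map f) F = poissonLIntegral μ fun V ↦ F (V.image f) := by
  simp only [poissonLIntegral, sampleLIntegral_map hf hF, map_measureReal_apply hf .univ,
    Set.preimage_univ]

lemma poissonLIntegral_mono {G : Finset E → ℝ≥0∞} (μ : Measure E) (hFG : ∀ V, F V ≤ G V) :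
    poissonLIntegral μ F ≤ poissonLIntegral μ G := by
  unfold poissonLIntegral sampleLIntegral
  gcongr
  exact hFG _

lemma sum_poissonLIntegral {ι : Type*} [Fintype ι] (μ : Measure E) {F : ι → Finset E → ℝ≥0∞}
    (hF : ∀ j, MeasurableOnSamples (F j)) :
    ∑ j, poissonLIntegral μ (F j) = poissonLIntegral μ fun V ↦ ∑ j, F j V := by
  simp only [poissonLIntegral, sampleLIntegral, ← Finset.mul_sum]
  rw [← Summable.tsum_finsetSum fun _ _ ↦ ENNReal.summable]
  refine congrArg _ (tsum_congr fun n ↦ ?_)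
  rw [← Finset.mul_sum, lintegral_finsetSum _ fun j _ ↦ hF j n]

lemma poissonLIntegral_ne_top [IsFiniteMeasure μ] (hF : ∀ V, F V ≤ V.card) :
    poissonLIntegral μ F ≠ ∞ := by
  have hterm (n : ℕ) :
      (n ! : ℝ≥0∞)⁻¹ * sampleLIntegral μ F n ≤ (n ! : ℝ≥0∞)⁻¹ * (2 * μ Set.univ) ^ n := by
    rw [mul_pow]
    gcongr
    refine (sampleLIntegral_le_mul_pow hF n).trans ?_
    gcongr
    exact_mod_cast n.lt_two_pow_self.le
  have hsum : ∑' n : ℕ, (n ! : ℝ≥0∞)⁻¹ * (2 * μ Set.univ) ^ n ≠ ∞ := by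
    rw [tsum_inv_factorial_mul_pow (by finiteness)]
    exact ENNReal.ofReal_ne_top
  exact ENNReal.mul_ne_top ENNReal.ofReal_ne_top
    (ne_top_of_le_ne_top hsum (ENNReal.tsum_le_tsum hterm))

lemma poissonLIntegral_smul [IsProbabilityMeasure μ] (c : ℝ≥0) (F : Finset E → ℝ≥0∞) :
    poissonLIntegral (c • μ) F =
      ∑' n, ENNReal.ofReal (poissonPMFReal c n) * sampleLIntegral μ F n := by
  rw [poissonLIntegral, ← ENNReal.tsum_mul_left]
  refine tsum_congr fun n ↦ ?_
  rw [sampleLIntegral_smul, measureReal_nnreal_smul_apply, probReal_univ, mul_one,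
    poissonPMFReal, ENNReal.ofReal_div_of_pos (by positivity),
    ENNReal.ofReal_mul (Real.exp_nonneg _), ENNReal.ofReal_pow c.coe_nonneg,
    ENNReal.ofReal_coe_nnreal, ENNReal.ofReal_natCast, ENNReal.div_eq_inv_mul]
  ring

end Poisson

section Cube

variable {d : ℕ} {a : EuclideanSpace ℝ (Fin d)} {c : ℝ}

lemma unitCube_eq_preimage (d : ℕ) :
    unitCube d = (MeasurableEquiv.toLp 2 (Fin d → ℝ)).symm ⁻¹' Set.Icc 0 1 := by
  ext x
  exact forall_and

instance isProbabilityMeasure_uniformCube (d : ℕ) : IsProbabilityMeasure (uniformCube d) := by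
  refine ⟨?_⟩
  rw [uniformCube, Measure.restrict_apply_univ, unitCube_eq_preimage,
    (EuclideanSpace.volume_preserving_symm_measurableEquiv_toLp (Fin d)).measure_preimage
      measurableSet_Icc.nullMeasurableSet, Real.volume_Icc_pi]
  simp

/-- The cube with lower corner `a` and side `c`, half-open so that points of neighbouring cubes
of a grid lie strictly further apart than the gap between the cubes. -/
def cubeIco (a : EuclideanSpace ℝ (Fin d)) (c : ℝ) : Set (EuclideanSpace ℝ (Fin d)) :=
  {x | ∀ i, x i ∈ Set.Ico (a i) (a i + c)}

lemma cubeIco_eq_preimage (a : EuclideanSpace ℝ (Fin d)) (c : ℝ) :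
    cubeIco a c = (MeasurableEquiv.toLp 2 (Fin d → ℝ)).symm ⁻¹'
      Set.univ.pi fun i ↦ Set.Ico (a i) (a i + c) := by
  ext x
  exact Set.mem_univ_pi.symm

lemma measurableSet_cubeIco (a : EuclideanSpace ℝ (Fin d)) (c : ℝ) :
    MeasurableSet (cubeIco a c) := by
  rw [cubeIco_eq_preimage]
  exact (MeasurableEquiv.measurable _) (.univ_pi fun _ ↦ measurableSet_Ico)

lemma uniformCube_eq_restrict_cubeIco (d : ℕ) :
    uniformCube d = volume.restrict (cubeIco (0 : EuclideanSpace ℝ (Fin d)) 1) := by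
  refine Measure.restrict_congr_set ?_
  rw [unitCube_eq_preimage, cubeIco_eq_preimage]
  simpa using (EuclideanSpace.volume_preserving_symm_measurableEquiv_toLp
    (Fin d)).quasiMeasurePreserving.preimage_ae_eq
      (Measure.univ_pi_Ico_ae_eq_Icc (μ := fun _ : Fin d ↦ volume) (f := 0) (g := 1)).symm

lemma preimage_add_smul_cubeIco (a : EuclideanSpace ℝ (Fin d)) (hc : 0 < c) :
    (fun x ↦ a + c • x) ⁻¹' cubeIco a c = cubeIco 0 1 := by
  ext x
  refine forall_congr' fun i ↦ ?_
  simp only [PiLp.add_apply, PiLp.smul_apply, PiLp.zero_apply, smul_eq_mul, zero_add, Set.mem_Ico,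
    le_add_iff_nonneg_right, mul_nonneg_iff_of_pos_left hc, add_lt_add_iff_left,
    mul_lt_iff_lt_one_right hc]

lemma volume_eq_smul_map_add_smul (a : EuclideanSpace ℝ (Fin d)) (hc : 0 < c) :
    (volume : Measure (EuclideanSpace ℝ (Fin d))) =
      (c ^ d).toNNReal • volume.map fun x ↦ a + c • x := by
  have hmap : (volume : Measure (EuclideanSpace ℝ (Fin d))).map (fun x ↦ a + c • x) =
      ENNReal.ofReal (c ^ d)⁻¹ • volume := by
    calc _ = (volume.map (c • ·)).map (a + ·) :=
          (Measure.map_map (measurable_const_add a) (measurable_const_smul c)).symm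
      _ = _ := by
          rw [Measure.map_addHaar_smul _ hc.ne', Measure.map_smul, map_add_left_eq_self,
            finrank_euclideanSpace_fin, abs_of_pos (by positivity)]
  rw [hmap, ENNReal.smul_def, ENNReal.ofNNReal_toNNReal, smul_smul,
    ← ENNReal.ofReal_mul (by positivity), mul_inv_cancel₀ (by positivity), ENNReal.ofReal_one,
    one_smul]

lemma restrict_uniformCube_cubeIco (hc : 0 < c) (hsub : cubeIco a c ⊆ unitCube d) :
    (uniformCube d).restrict (cubeIco a c) =
      (c ^ d).toNNReal • (uniformCube d).map fun x ↦ a + c • x := by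
  calc (uniformCube d).restrict (cubeIco a c) = volume.restrict (cubeIco a c) :=
        Measure.restrict_restrict_of_subset hsub
    _ = (c ^ d).toNNReal • (volume.map fun x ↦ a + c • x).restrict (cubeIco a c) := by
        rw [← Measure.restrict_smul, ← volume_eq_smul_map_add_smul a hc]
    _ = (c ^ d).toNNReal • (uniformCube d).map fun x ↦ a + c • x := by
        rw [Measure.restrict_map (by fun_prop) (measurableSet_cubeIco a c),
          preimage_add_smul_cubeIco a hc, uniformCube_eq_restrict_cubeIco]

/-- The lower corner of the cube with index `j` in a grid of spacing `w`. -/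
def gridCorner {m : ℕ} (w : ℝ) (j : Fin d → Fin m) : EuclideanSpace ℝ (Fin d) :=
  WithLp.toLp 2 fun i ↦ (j i : ℝ) * w

lemma cubeIco_gridCorner_subset_unitCube {m : ℕ} {w : ℝ} (hw : 0 ≤ w) (hcw : c ≤ w)
    (hm : m * w ≤ 1) (j : Fin d → Fin m) : cubeIco (gridCorner w j) c ⊆ unitCube d := by
  intro x hx i
  obtain ⟨hlower, hupper⟩ : (j i : ℝ) * w ≤ x i ∧ x i < (j i : ℝ) * w + c := hx i
  have hj : (j i + 1 : ℝ) ≤ m := by exact_mod_cast (j i).2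
  refine ⟨hlower.trans' (by positivity), hupper.le.trans ?_⟩
  calc (j i : ℝ) * w + c ≤ (j i + 1) * w := by linarith
    _ ≤ m * w := by gcongr
    _ ≤ 1 := hm

lemma sub_lt_dist_of_mem_cubeIco_gridCorner {m : ℕ} {w : ℝ} (hw : 0 ≤ w) {i j : Fin d → Fin m}
    (hij : i ≠ j) {u v : EuclideanSpace ℝ (Fin d)} (hu : u ∈ cubeIco (gridCorner w i) c)
    (hv : v ∈ cubeIco (gridCorner w j) c) : w - c < dist u v := by
  obtain ⟨l, hl⟩ := Function.ne_iff.1 hij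
  wlog hlt : i l < j l generalizing i j u v
  · rw [dist_comm]
    exact this hij.symm hv hu hl.symm (hl.lt_or_gt.resolve_left hlt)
  have hul : u l < i l * w + c := (hu l).2
  have hvl : j l * w ≤ v l := (hv l).1
  have hstep : (i l + 1) * w ≤ j l * w := by
    gcongr
    exact_mod_cast hlt
  calc w - c < v l - u l := by linarith
    _ ≤ ‖(v - u) l‖ := le_abs_self _
    _ ≤ ‖v - u‖ := PiLp.norm_apply_le (v - u) l
    _ = dist u v := by rw [dist_comm, dist_eq_norm]

end Cube

section Superadditivity

open scoped ENNReal NNReal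

variable {d : ℕ} {a : EuclideanSpace ℝ (Fin d)} {c r : ℝ}

lemma measurableOnSamples_maxColorable (d k : ℕ) (r : ℝ) :
    MeasurableOnSamples fun V ↦ (maxColorable d k r V : ℝ≥0∞) := fun n ↦
  Measurable.of_discrete.comp (measurable_maxColorable_image d k r (ι := Fin n))

lemma EH_eq_toReal_sampleLIntegral (d k : ℕ) (r : ℝ) (n : ℕ) :
    EH d k r n = (sampleLIntegral (uniformCube d) (fun V ↦ maxColorable d k r V) n).toReal := by
  rw [sampleLIntegral, ← integral_toReal (measurableOnSamples_maxColorable d k r n).aemeasurable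
    (.of_forall fun _ ↦ ENNReal.natCast_lt_top _)]
  simp only [EH, ENNReal.toReal_natCast]

lemma poissonLIntegral_maxColorable_ne_top (d k : ℕ) (r : ℝ)
    (μ : Measure (EuclideanSpace ℝ (Fin d))) [IsFiniteMeasure μ] :
    poissonLIntegral μ (fun V ↦ maxColorable d k r V) ≠ ∞ :=
  poissonLIntegral_ne_top fun V ↦ Nat.cast_le.2 (maxColorable_le_card d k r V)

lemma EF_eq_toReal_poissonLIntegral (d k : ℕ) (lam t : ℝ) :
    EF d k lam t = (poissonLIntegral ((lam * t ^ d).toNNReal • uniformCube d)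
      fun V ↦ maxColorable d k (1 / t) V).toReal := by
  have hfinite := poissonLIntegral_maxColorable_ne_top d k (1 / t)
    ((lam * t ^ d).toNNReal • uniformCube d)
  rw [poissonLIntegral_smul] at hfinite ⊢
  rw [ENNReal.tsum_toReal_eq (ENNReal.ne_top_of_tsum_ne_top hfinite)]
  refine tsum_congr fun n ↦ ?_
  rw [ENNReal.toReal_mul, ENNReal.toReal_ofReal (by unfold poissonPMFReal; positivity),
    EH_eq_toReal_sampleLIntegral]

open Classical in
-- Thinning followed by rescaling: the part of the Poisson process in a subcube is a scaled copy of
-- a Poisson process on the unit cube.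
lemma poissonLIntegral_maxColorable_filter_cubeIco (k : ℕ) (κ : ℝ≥0) (r : ℝ) (hc : 0 < c)
    (hsub : cubeIco a c ⊆ unitCube d) :
    poissonLIntegral (κ • uniformCube d)
        (fun V ↦ maxColorable d k (c * r) {u ∈ V | u ∈ cubeIco a c}) =
      poissonLIntegral ((κ * (c ^ d).toNNReal) • uniformCube d)
        fun V ↦ maxColorable d k r V := by
  have hmap : (κ • uniformCube d).restrict (cubeIco a c) =
      ((κ * (c ^ d).toNNReal) • uniformCube d).map fun x ↦ a + c • x := by
    rw [Measure.restrict_smul, restrict_uniformCube_cubeIco hc hsub, smul_smul, Measure.map_smul]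
  have hmeas := measurableOnSamples_maxColorable d k (c * r)
  rw [poissonLIntegral_filter (measurableSet_cubeIco a c) hmeas, hmap,
    poissonLIntegral_map (by fun_prop) hmeas]
  simp only [maxColorable_image_smul_add a hc]

lemma pow_mul_poissonLIntegral_maxColorable_le (k : ℕ) (κ : ℝ≥0) {m : ℕ} (hc : 0 < c) (hr : 0 ≤ r)
    (hm : m * (c + c * r) ≤ 1) :
    (m : ℝ≥0∞) ^ d * poissonLIntegral ((κ * (c ^ d).toNNReal) • uniformCube d)
        (fun V ↦ maxColorable d k r V) ≤
      poissonLIntegral (κ • uniformCube d) fun V ↦ maxColorable d k (c * r) V := by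
  classical
  have hcr : 0 ≤ c * r := by positivity
  let Q (j : Fin d → Fin m) := cubeIco (gridCorner (c + c * r) j) c
  have hsub (j : Fin d → Fin m) : Q j ⊆ unitCube d :=
    cubeIco_gridCorner_subset_unitCube (by positivity) (by linarith) hm j
  have hsep : ∀ i j, i ≠ j → ∀ u ∈ Q i, ∀ v ∈ Q j, c * r < dist u v := fun i j hij u hu v hv ↦ by
    simpa using sub_lt_dist_of_mem_cubeIco_gridCorner (by positivity) hij hu hv
  calc (m : ℝ≥0∞) ^ d * poissonLIntegral ((κ * (c ^ d).toNNReal) • uniformCube d)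
        (fun V ↦ maxColorable d k r V)
    _ = ∑ j, poissonLIntegral (κ • uniformCube d)
          fun V ↦ maxColorable d k (c * r) {u ∈ V | u ∈ Q j} := by
        simp [Q, poissonLIntegral_maxColorable_filter_cubeIco k κ r hc (hsub _)]
    _ = poissonLIntegral (κ • uniformCube d)
          fun V ↦ ∑ j, (maxColorable d k (c * r) {u ∈ V | u ∈ Q j} : ℝ≥0∞) :=
        sum_poissonLIntegral _ fun j ↦
          (measurableOnSamples_maxColorable d k (c * r)).filter (measurableSet_cubeIco _ c)
    _ ≤ poissonLIntegral (κ • uniformCube d) fun V ↦ maxColorable d k (c * r) V :=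
        poissonLIntegral_mono _ fun V ↦ by
          exact_mod_cast sum_maxColorable_filter_le hcr hsep V

end Superadditivity

/-- superadditive expectation bound:
`E[F_{k,λ}(t)] ≥ ⌊t/(s+1)⌋^d E[F_{k,λ}(s)]` for `0 < s ≤ t`. -/
theorem EF_superadditive_bound (d k : ℕ) (hd : 1 ≤ d) (hk : 1 ≤ k) (lam : ℝ) (hlam : 0 < lam)
    (s t : ℝ) (hs : 0 < s) (hst : s ≤ t) :
    ((⌊t / (s + 1)⌋ : ℤ) : ℝ) ^ d * EF d k lam s ≤ EF d k lam t := by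
  have ht : 0 < t := hs.trans_le hst
  obtain ⟨m, hm⟩ := Int.eq_ofNat_of_zero_le (Int.floor_nonneg.2 (by positivity : 0 ≤ t / (s + 1)))
  have hmt : (m : ℝ) ≤ t / (s + 1) := by
    simpa [hm] using Int.floor_le (t / (s + 1))
  have hfit : m * (s / t + s / t * (1 / s)) ≤ 1 := by
    calc m * (s / t + s / t * (1 / s)) ≤ t / (s + 1) * (s / t + s / t * (1 / s)) := by gcongr
      _ = 1 := by field_simp
  have hintensity : (lam * t ^ d).toNNReal * ((s / t) ^ d).toNNReal = (lam * s ^ d).toNNReal := by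
    rw [← Real.toNNReal_mul (by positivity), mul_assoc, ← mul_pow, mul_div_cancel₀ s ht.ne']
  have hgrid := pow_mul_poissonLIntegral_maxColorable_le k (lam * t ^ d).toNNReal (d := d)
    (div_pos hs ht) (one_div_nonneg.2 hs.le) hfit
  rw [hintensity, div_mul_div_comm, mul_one, mul_comm t s, div_mul_cancel_left₀ hs.ne', ← one_div]
    at hgrid
  simpa [hm, EF_eq_toReal_poissonLIntegral] using
    ENNReal.toReal_mono (poissonLIntegral_maxColorable_ne_top d k (1 / t) _) hgrid
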